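/- Let A be a commutative ring with 2 ∈ A^×, let (R,*) be an involutive A-algebra, and let (D,P) be a weak symplectic determinant law of dimension 2d on (R,*). Then for every commutative A-algebra B and all commuting elements x, y ∈ R^+ ⊗_A B, the product xy lies in R^+ ⊗_A B and P_B(xy) = P_B(x)·P_B(y). -/

import Mathlib

/-!
STATEMENT 3: for a weak symplectic determinant law `(D, P)` of dimension `2d` and commuting
symmetric elements `x, y` of `R⁺ ⊗ B`, the product `x·y` is again symmetric (i.e. lies in
the image of `R⁺ ⊗ B`) and `P_B(x y) = P_B(x) · P_B(y)`.
-/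

open scoped TensorProduct

universe u

namespace SympDet

/-! ### Polynomial laws valued in the base ring -/

variable (A : Type u) [CommRing A]

/-- An `A`-polynomial law on the `A`-module `M` with values in `A`: a family of maps
`M ⊗[A] B → B` (written `B ⊗[A] M → B`), one for each commutative `A`-algebra `B`,
natural in `B`. -/
structure PolyLaw (M : Type u) [AddCommGroup M] [Module A M] : Type (u + 1) where
  toFun : ∀ (B : Type u) [CommRing B] [Algebra A B], B ⊗[A] M → B
  natural : ∀ (B B' : Type u) [CommRing B] [Algebra A B] [CommRing B'] [Algebra A B']
      (f : B →ₐ[A] B') (x : B ⊗[A] M),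
      f (toFun B x) = toFun B' (LinearMap.rTensor M f.toLinearMap x)

variable {A}

/-- Homogeneity of degree `n` of a polynomial law. -/
def PolyLaw.IsHomog {M : Type u} [AddCommGroup M] [Module A M] (P : PolyLaw A M) (n : ℕ) : Prop :=
  ∀ (B : Type u) [CommRing B] [Algebra A B] (b : B) (x : B ⊗[A] M),
    P.toFun B (b • x) = b ^ n * P.toFun B x

/-- The kernel of a polynomial law. -/
def PolyLaw.lawKer {M : Type u} [AddCommGroup M] [Module A M] (P : PolyLaw A M) : Set M :=
  {m | ∀ (B : Type u) [CommRing B] [Algebra A B] (b : B) (y : B ⊗[A] M),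
    P.toFun B (b ⊗ₜ[A] m + y) = P.toFun B y}

/-- Multiplicativity of a polynomial law on an `A`-algebra `R`. -/
def PolyLaw.IsMult {R : Type u} [Ring R] [Algebra A R] (D : PolyLaw A R) : Prop :=
  ∀ (B : Type u) [CommRing B] [Algebra A B],
    D.toFun B 1 = 1 ∧ ∀ x y : B ⊗[A] R, D.toFun B (x * y) = D.toFun B x * D.toFun B y

/-! ### Involutive algebras -/

variable (A) in
/-- An involutive `A`-algebra structure: an `A`-linear involutive anti-automorphism. -/
structure InvAlg (R : Type u) [Ring R] [Algebra A R] : Type u where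
  star : R →ₗ[A] R
  star_one : star 1 = 1
  star_mul : ∀ x y : R, star (x * y) = star y * star x
  star_star : ∀ x : R, star (star x) = x

variable {R : Type u} [Ring R] [Algebra A R]

/-- The submodule of symmetric elements `R⁺`. -/
def InvAlg.plus (s : InvAlg A R) : Submodule A R :=
  LinearMap.ker (s.star - LinearMap.id)

theorem InvAlg.one_mem_plus (s : InvAlg A R) : (1 : R) ∈ s.plus := by
  simp [InvAlg.plus, LinearMap.mem_ker, LinearMap.sub_apply, s.star_one]

/-- `1` as an element of `R⁺`. -/
def InvAlg.onePlus (s : InvAlg A R) : s.plus := ⟨1, s.one_mem_plus⟩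

/-- The inclusion `B ⊗[A] R⁺ → B ⊗[A] R`. -/
noncomputable def InvAlg.incl (s : InvAlg A R) (B : Type u) [CommRing B] [Algebra A B] :
    B ⊗[A] ↥s.plus →ₗ[A] B ⊗[A] R :=
  LinearMap.lTensor B s.plus.subtype

/-- A weak symplectic determinant law of dimension `2d`. -/
structure IsWeakSympDet (s : InvAlg A R) (d : ℕ) (D : PolyLaw A R) (P : PolyLaw A ↥s.plus) :
    Prop where
  mult : D.IsMult
  homog : D.IsHomog (2 * d)
  starInv : ∀ (B : Type u) [CommRing B] [Algebra A B] (x : B ⊗[A] R),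
      D.toFun B (LinearMap.lTensor B s.star x) = D.toFun B x
  homogP : P.IsHomog d
  sq : ∀ (B : Type u) [CommRing B] [Algebra A B] (x : B ⊗[A] ↥s.plus),
      P.toFun B x ^ 2 = D.toFun B (s.incl B x)
  one : P.toFun A ((1 : A) ⊗ₜ[A] s.onePlus) = 1

/-! ### Characteristic polynomials and the Cayley-Hamilton ideal -/

/-- The characteristic polynomial `χ^P(x, t) = P_{B[t]}(t·e - x)` of a polynomial law,
relative to a marked element `e` (the unit). -/
noncomputable def chPoly {M : Type u} [AddCommGroup M] [Module A M] (P : PolyLaw A M) (e : M)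
    (B : Type u) [CommRing B] [Algebra A B] (x : B ⊗[A] M) : Polynomial B :=
  P.toFun (Polynomial B)
    ((Polynomial.X : Polynomial B) ⊗ₜ[A] e -
      LinearMap.rTensor M (IsScalarTower.toAlgHom A B (Polynomial B)).toLinearMap x)

/-- The coefficient `(-1)^i Λ_i` of `t^(n-i)` in the characteristic polynomial, with the
convention that it vanishes for `i > n`. -/
noncomputable def chCoeff {M : Type u} [AddCommGroup M] [Module A M] (P : PolyLaw A M) (e : M)
    (n i : ℕ) (B : Type u) [CommRing B] [Algebra A B] (x : B ⊗[A] M) : B :=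
  if i ≤ n then (-1 : B) ^ i * (chPoly P e B x).coeff (n - i) else 0

/-- `χ^P(x, x)`: the characteristic polynomial of `x ∈ (B ⊗ R)⁺` evaluated at `x` itself. -/
noncomputable def chEval (s : InvAlg A R) (P : PolyLaw A ↥s.plus) (B : Type u) [CommRing B]
    [Algebra A B] (x : B ⊗[A] ↥s.plus) : B ⊗[A] R :=
  Polynomial.aeval (s.incl B x) (chPoly P s.onePlus B x)

/-- The `A`-linear coefficient extraction map on multivariate polynomials. -/
noncomputable def mvLcoeff {n : ℕ} (α : Fin n →₀ ℕ) : MvPolynomial (Fin n) A →ₗ[A] A where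
  toFun p := MvPolynomial.coeff α p
  map_add' p q := MvPolynomial.coeff_add α p q
  map_smul' c p := MvPolynomial.coeff_smul α c p

/-- Extracting the coefficient of the monomial `t^α` from an element of `R[t_1,…,t_n]`. -/
noncomputable def tensorCoeff {n : ℕ} (α : Fin n →₀ ℕ) :
    (MvPolynomial (Fin n) A) ⊗[A] R →ₗ[A] R :=
  (TensorProduct.lid A R).toLinearMap ∘ₗ LinearMap.rTensor R (mvLcoeff α)

/-- The generators `χ^P_α(r_1, …, r_n)` of the Cayley–Hamilton ideal of `P`:
the multihomogeneous coefficients of `χ^P(t_1 r_1 + ⋯ + t_n r_n, t_1 r_1 + ⋯ + t_n r_n)`. -/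
def chGen (s : InvAlg A R) (P : PolyLaw A ↥s.plus) : Set R :=
  {y | ∃ (n : ℕ) (r : Fin n → ↥s.plus) (α : Fin n →₀ ℕ),
    y = tensorCoeff α
      (chEval s P (MvPolynomial (Fin n) A)
        (∑ i : Fin n, (MvPolynomial.X i : MvPolynomial (Fin n) A) ⊗ₜ[A] r i))}

/-- The Cayley–Hamilton ideal `CH(P)`: the two-sided ideal generated by the
multihomogeneous coefficients of the characteristic polynomials. -/
def chIdeal (s : InvAlg A R) (P : PolyLaw A ↥s.plus) : TwoSidedIdeal R :=
  TwoSidedIdeal.span (chGen s P)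

/-- A symplectic determinant law of dimension `2d`: a weak symplectic determinant law
such that `CH(P) ⊆ ker(D)`. -/
def IsSympDet (s : InvAlg A R) (d : ℕ) (D : PolyLaw A R) (P : PolyLaw A ↥s.plus) : Prop :=
  IsWeakSympDet s d D P ∧ ∀ y ∈ chIdeal s P, y ∈ D.lawKer

/-- A symplectic Cayley–Hamilton algebra of degree `2d`: a symplectic determinant law
such that `χ^P(r, r) = 0` for all symmetric `r` over all base extensions. -/
def IsSympCH (s : InvAlg A R) (d : ℕ) (D : PolyLaw A R) (P : PolyLaw A ↥s.plus) : Prop :=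
  IsSympDet s d D P ∧
    ∀ (B : Type u) [CommRing B] [Algebra A B] (x : B ⊗[A] ↥s.plus), chEval s P B x = 0


end SympDet

namespace SympDet

variable {A : Type u} [CommRing A] {R : Type u} [Ring R] [Algebra A R]

theorem rT_smul {M : Type u} [AddCommGroup M] [Module A M] {B B' : Type u} [CommRing B]
    [Algebra A B] [CommRing B'] [Algebra A B'] (f : B →ₐ[A] B') (b : B) (x : B ⊗[A] M) :
    LinearMap.rTensor M f.toLinearMap (b • x) = f b • LinearMap.rTensor M f.toLinearMap x := by
  induction x with
  | zero => simp
  | tmul c m => simp [TensorProduct.smul_tmul']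
  | add x y hx hy => simp only [smul_add, map_add, hx, hy]

theorem rT_comp {M : Type u} [AddCommGroup M] [Module A M] {B B' : Type u} [CommRing B]
    [Algebra A B] [CommRing B'] [Algebra A B'] (f : B →ₐ[A] B') (g : B' →ₐ[A] B)
    (hfg : ∀ b, g (f b) = b) (x : B ⊗[A] M) :
    LinearMap.rTensor M g.toLinearMap (LinearMap.rTensor M f.toLinearMap x) = x := by
  induction x with
  | zero => simp
  | tmul c m => simp [hfg]
  | add x y hx hy => simp only [map_add, hx, hy]

theorem rT_mul {B B' : Type u} [CommRing B]
    [Algebra A B] [CommRing B'] [Algebra A B'] (f : B →ₐ[A] B') (x y : B ⊗[A] R) :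
    LinearMap.rTensor R f.toLinearMap (x * y) =
      LinearMap.rTensor R f.toLinearMap x * LinearMap.rTensor R f.toLinearMap y :=
  map_mul (Algebra.TensorProduct.map f (AlgHom.id A R)) x y

theorem incl_smul (s : InvAlg A R) {B : Type u} [CommRing B] [Algebra A B] (b : B)
    (x : B ⊗[A] ↥s.plus) : s.incl B (b • x) = b • s.incl B x := by
  unfold InvAlg.incl
  induction x with
  | zero => simp
  | tmul c m => simp [TensorProduct.smul_tmul']
  | add x y hx hy => simp only [smul_add, map_add, hx, hy]

theorem incl_rT (s : InvAlg A R) {B B' : Type u} [CommRing B] [Algebra A B] [CommRing B']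
    [Algebra A B'] (f : B →ₐ[A] B') (x : B ⊗[A] ↥s.plus) :
    s.incl B' (LinearMap.rTensor _ f.toLinearMap x) =
      LinearMap.rTensor R f.toLinearMap (s.incl B x) := by
  unfold InvAlg.incl
  induction x with
  | zero => simp
  | tmul c m => simp
  | add x y hx hy => simp only [map_add, hx, hy]

theorem incl_one (s : InvAlg A R) (B : Type u) [CommRing B] [Algebra A B] :
    s.incl B ((1 : B) ⊗ₜ[A] s.onePlus) = 1 := by
  simp [InvAlg.incl, InvAlg.onePlus, Algebra.TensorProduct.one_def]

theorem star_incl (s : InvAlg A R) {B : Type u} [CommRing B] [Algebra A B]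
    (x : B ⊗[A] ↥s.plus) : LinearMap.lTensor B s.star (s.incl B x) = s.incl B x := by
  unfold InvAlg.incl
  induction x with
  | zero => simp
  | tmul c m =>
    have hm : s.star m = m := by
      have := m.2
      simpa [InvAlg.plus, sub_eq_zero] using this
    simp [hm]
  | add x y hx hy => simp only [map_add, hx, hy]

theorem star_mulT (s : InvAlg A R) {B : Type u} [CommRing B] [Algebra A B]
    (x y : B ⊗[A] R) : LinearMap.lTensor B s.star (x * y) =
      LinearMap.lTensor B s.star y * LinearMap.lTensor B s.star x := by
  induction x with
  | zero => simp
  | add x x' hx hy => simp only [map_add, add_mul, mul_add, hx, hy]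
  | tmul b r =>
    induction y with
    | zero => simp
    | add x x' hx hy => simp only [map_add, add_mul, mul_add, hx, hy]
    | tmul c m => simp [s.star_mul, mul_comm]

theorem exists_symm (h2 : IsUnit (2 : A)) (s : InvAlg A R) {B : Type u} [CommRing B]
    [Algebra A B] (w : B ⊗[A] R) (hw : LinearMap.lTensor B s.star w = w) :
    ∃ z : B ⊗[A] ↥s.plus, s.incl B z = w := by
  obtain ⟨c, hc⟩ := h2.exists_left_inv
  have hmem : ∀ r, (c • (LinearMap.id + s.star) : R →ₗ[A] R) r ∈ s.plus := by
    intro r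
    simp only [InvAlg.plus, LinearMap.mem_ker, LinearMap.sub_apply, LinearMap.smul_apply,
      LinearMap.add_apply, LinearMap.id_apply, map_smul, map_add, s.star_star]
    rw [sub_add_sub_cancel, sub_self, smul_zero]
  refine ⟨LinearMap.lTensor B (LinearMap.codRestrict s.plus _ hmem) w, ?_⟩
  unfold InvAlg.incl
  rw [← LinearMap.comp_apply, ← LinearMap.lTensor_comp, LinearMap.subtype_comp_codRestrict,
    LinearMap.lTensor_smul, LinearMap.lTensor_add, LinearMap.lTensor_id]
  simp only [LinearMap.smul_apply, LinearMap.add_apply, LinearMap.id_apply, hw]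
  rw [← two_smul A w, smul_smul, hc, one_smul]

theorem P_one {s : InvAlg A R} {d : ℕ} {D : PolyLaw A R} {P : PolyLaw A ↥s.plus}
    (h : IsWeakSympDet s d D P) (B : Type u) [CommRing B] [Algebra A B] :
    P.toFun B ((1 : B) ⊗ₜ[A] s.onePlus) = 1 := by
  have := P.natural A B (Algebra.ofId A B) ((1 : A) ⊗ₜ[A] s.onePlus)
  rw [h.one, map_one, LinearMap.rTensor_tmul] at this
  simpa using this.symm

theorem poly_sq_eq {B : Type u} [CommRing B] (h2 : IsUnit (2 : B)) (F G : Polynomial B)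
    (hF : F.eval 0 = 1) (hG : G.eval 0 = 1) (h : F ^ 2 = G ^ 2) : F = G := by
  have hu : IsUnit ((F + G : Polynomial B) : PowerSeries B) := by
    rw [PowerSeries.isUnit_iff_constantCoeff, Polynomial.constantCoeff_coe,
      Polynomial.coeff_zero_eq_eval_zero, Polynomial.eval_add, hF, hG, one_add_one_eq_two]
    exact h2
  have h0 : (F + G) * (F - G) = 0 := by linear_combination h
  have h1 : ((F + G : Polynomial B) : PowerSeries B) * ((F - G : Polynomial B) : PowerSeries B)
      = 0 := by
    rw [← Polynomial.coe_mul, h0, Polynomial.coe_zero]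
  rw [hu.mul_right_eq_zero, Polynomial.coe_eq_zero_iff] at h1
  exact sub_eq_zero.mp h1

end SympDet

open SympDet in
theorem stmt_3 {A : Type u} [CommRing A] {R : Type u} [Ring R] [Algebra A R]
    (h2 : IsUnit (2 : A)) (s : InvAlg A R) (d : ℕ) (D : PolyLaw A R) (P : PolyLaw A ↥s.plus)
    (h : IsWeakSympDet s d D P) :
    ∀ (B : Type u) [CommRing B] [Algebra A B] (x y : B ⊗[A] ↥s.plus),
      s.incl B x * s.incl B y = s.incl B y * s.incl B x →
        (∃ z : B ⊗[A] ↥s.plus, s.incl B z = s.incl B x * s.incl B y) ∧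
          ∀ z : B ⊗[A] ↥s.plus, s.incl B z = s.incl B x * s.incl B y →
            P.toFun B z = P.toFun B x * P.toFun B y := by
  intro B _ _ x y hxy
  refine ⟨exists_symm h2 s _ ?_, ?_⟩
  · rw [star_mulT, star_incl, star_incl, hxy]
  intro z hz
  let ι : B →ₐ[A] Polynomial B := IsScalarTower.toAlgHom A B (Polynomial B)
  let ev : B → (Polynomial B →ₐ[A] B) := fun c =>
    (Polynomial.aeval (R := B) c).restrictScalars A
  have hev : ∀ c p, ev c p = p.eval c := fun c p => by
    simp [ev, Polynomial.aeval_def, Polynomial.eval₂_eq_eval_map]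
  have hι : ∀ c b, ev c (ι b) = b := fun c b => by
    simp [ev, ι]
  let T : Polynomial B := Polynomial.X
  let e : Polynomial B ⊗[A] ↥s.plus := 1 ⊗ₜ[A] s.onePlus
  let J : B ⊗[A] ↥s.plus → Polynomial B ⊗[A] ↥s.plus := LinearMap.rTensor _ ι.toLinearMap
  have hJ : ∀ c w, LinearMap.rTensor _ (ev c).toLinearMap (J w) = w := fun c w =>
    rT_comp ι (ev c) (hι c) w
  have he : ∀ c, LinearMap.rTensor _ (ev c).toLinearMap e = 1 ⊗ₜ[A] s.onePlus := fun c => by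
    simp [e]
  have hT : ∀ c, ev c T = c := fun c => by simp [hev, T]
  let x' := (1 - T) • e + T • J x
  let y' := (1 - T) • e + T • J y
  let z' := (1 - T) ^ 2 • e + ((1 - T) * T) • J x + ((1 - T) * T) • J y + T ^ 2 • J z
  have hJz : s.incl _ (J z) = s.incl _ (J x) * s.incl _ (J y) := by
    simp only [J, incl_rT, hz, rT_mul]
  have hz' : s.incl _ z' = s.incl _ x' * s.incl _ y' := by
    simp only [z', x', y', map_add, incl_smul, hJz]
    rw [show s.incl _ e = 1 from incl_one s _]
    simp only [add_mul, mul_add, smul_mul_smul_comm, one_mul, mul_one]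
    rw [mul_comm T (1 - T), pow_two, pow_two]
    abel
  have key : P.toFun _ z' = P.toFun _ x' * P.toFun _ y' := by
    have h2B : IsUnit (2 : B) := by
      have h3 := h2.map (algebraMap A B)
      rwa [map_ofNat] at h3
    apply poly_sq_eq h2B
    · rw [← hev, P.natural]
      simp only [z', map_add, rT_smul, hJ, he, map_sub, map_mul, map_pow, hT, map_one]
      simpa using P_one h B
    · rw [← hev, map_mul, P.natural, P.natural]
      simp only [x', y', map_add, rT_smul, hJ, he, map_sub, hT, map_one]
      simp [P_one h B]
    · rw [mul_pow, h.sq, h.sq, h.sq, hz', (h.mult _).2]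
  have := congrArg (ev 1) key
  rw [map_mul, P.natural, P.natural, P.natural] at this
  simp only [z', x', y', map_add, rT_smul, hJ, he, map_sub, map_mul, map_pow, hT, map_one] at this
  simpa using this
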